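/- arXiv:1608.08907 — 8 statements merged into one kernel-verified Lean document; each statement's English description precedes it below -/
import Mathlib

section
/- Fix real numbers SNR1, SNR2 > 0, bSNR1, bSNR2 > 0, and INR12, INR21 > 1. For every ρ ∈ [0, (1 − max(1/INR12, 1/INR21))⁺] and every μ1, μ2 ∈ [0,1], let M = min(a_{2,1}(ρ)+a_{1,2}, a_{1,1}+a_{2,2}(ρ), a_{3,1}(ρ,μ2)+a_{1,1}+a_{3,2}(ρ,μ1)+a_{7,2}(ρ,μ1,μ2), a_{3,1}(ρ,μ2)+a_{5,1}(ρ,μ2)+a_{3,2}(ρ,μ1)+a_{5,2}(ρ,μ1), a_{3,1}(ρ,μ2)+a_{7,1}(ρ,μ1,μ2)+a_{3,2}(ρ,μ1)+a_{1,2}). Then each of the following five quantities is greater than or equal to M: a_{2,1}(ρ)+a_{6,2}(ρ,μ2); a_{6,1}(ρ,μ1)+a_{2,2}(ρ); a_{3,1}(ρ,μ2)+a_{4,1}(ρ,μ2)+a_{1,1}+a_{3,2}(ρ,μ1)+a_{5,2}(ρ,μ1); a_{3,1}(ρ,μ2)+a_{7,1}(ρ,μ1,μ2)+a_{3,2}(ρ,μ1)+a_{5,2}(ρ,μ1);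 and a_{3,1}(ρ,μ2)+a_{5,1}(ρ,μ2)+a_{3,2}(ρ,μ1)+a_{4,2}(ρ,μ1)+a_{1,2}. Consequently, the minimum over all ten quantities equals M. -/
/- Functions `b_{1,i}`, `b_{2,i}` of the paper (all logs base 2). -/
noncomputable def b11 (SNR1 INR12 ρ : ℝ) : ℝ := SNR1 + 2 * ρ * Real.sqrt (SNR1 * INR12) + INR12
noncomputable def b12 (SNR2 INR21 ρ : ℝ) : ℝ := SNR2 + 2 * ρ * Real.sqrt (SNR2 * INR21) + INR21
noncomputable def b21 (INR12 ρ : ℝ) : ℝ := (1 - ρ) * INR12 - 1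
noncomputable def b22 (INR21 ρ : ℝ) : ℝ := (1 - ρ) * INR21 - 1

/- Achievable-region bounds `a_{l,i}`. -/
noncomputable def a11 (SNR1 INR21 : ℝ) : ℝ := (1/2) * Real.logb 2 (2 + SNR1 / INR21) - 1/2
noncomputable def a12 (SNR2 INR12 : ℝ) : ℝ := (1/2) * Real.logb 2 (2 + SNR2 / INR12) - 1/2
noncomputable def a21 (SNR1 INR12 ρ : ℝ) : ℝ := (1/2) * Real.logb 2 (b11 SNR1 INR12 ρ + 1) - 1/2
noncomputable def a22 (SNR2 INR21 ρ : ℝ) : ℝ := (1/2) * Real.logb 2 (b12 SNR2 INR21 ρ + 1) - 1/2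
noncomputable def a31 (SNR1 bSNR1 INR12 ρ μ : ℝ) : ℝ :=
  (1/2) * Real.logb 2 ((bSNR1 * (b21 INR12 ρ + 2) + b11 SNR1 INR12 1 + 1) /
    (bSNR1 * ((1 - μ) * b21 INR12 ρ + 2) + b11 SNR1 INR12 1 + 1))
noncomputable def a32 (SNR2 bSNR2 INR21 ρ μ : ℝ) : ℝ :=
  (1/2) * Real.logb 2 ((bSNR2 * (b22 INR21 ρ + 2) + b12 SNR2 INR21 1 + 1) /
    (bSNR2 * ((1 - μ) * b22 INR21 ρ + 2) + b12 SNR2 INR21 1 + 1))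
noncomputable def a41 (INR12 ρ μ : ℝ) : ℝ := (1/2) * Real.logb 2 ((1 - μ) * b21 INR12 ρ + 2) - 1/2
noncomputable def a42 (INR21 ρ μ : ℝ) : ℝ := (1/2) * Real.logb 2 ((1 - μ) * b22 INR21 ρ + 2) - 1/2
noncomputable def a51 (SNR1 INR12 INR21 ρ μ : ℝ) : ℝ :=
  (1/2) * Real.logb 2 (2 + SNR1 / INR21 + (1 - μ) * b21 INR12 ρ) - 1/2
noncomputable def a52 (SNR2 INR12 INR21 ρ μ : ℝ) : ℝ :=
  (1/2) * Real.logb 2 (2 + SNR2 / INR12 + (1 - μ) * b22 INR21 ρ) - 1/2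
noncomputable def a61 (SNR1 INR21 ρ μ : ℝ) : ℝ :=
  (1/2) * Real.logb 2 ((SNR1 / INR21) * ((1 - μ) * b22 INR21 ρ + 1) + 2) - 1/2
noncomputable def a62 (SNR2 INR12 ρ μ : ℝ) : ℝ :=
  (1/2) * Real.logb 2 ((SNR2 / INR12) * ((1 - μ) * b21 INR12 ρ + 1) + 2) - 1/2
noncomputable def a71 (SNR1 INR12 INR21 ρ μ1 μ2 : ℝ) : ℝ :=
  (1/2) * Real.logb 2
    ((SNR1 / INR21) * ((1 - μ1) * b22 INR21 ρ + 1) + (1 - μ2) * b21 INR12 ρ + 2) - 1/2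
noncomputable def a72 (SNR2 INR12 INR21 ρ μ1 μ2 : ℝ) : ℝ :=
  (1/2) * Real.logb 2
    ((SNR2 / INR12) * ((1 - μ2) * b21 INR12 ρ + 1) + (1 - μ1) * b22 INR21 ρ + 2) - 1/2

/-!
Every discarded quantity dominates one of the retained ones with which it shares all but one or two
summands. After cancelling, what remains is `a_{1,i} ≤ a_{6,i}` and `a_{1,i} ≤ a_{5,i}`, which are
monotonicity of the logarithm, and `a_{5,i} ≤ a_{4,i} + a_{1,i}`, which is the expansion
`2 (2 + x + p) ≤ (2 + x) (2 + p)` for `x = SNR_i / INR_ji` and `p = (1 - μ) b_{2,i}`. The range of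
`ρ` serves to make `b_{2,1}` and `b_{2,2}` nonnegative.
-/

theorem logb_base_add_add_add_one_le {b x p : ℝ} (hb : 1 < b) (hx : 0 ≤ x) (hp : 0 ≤ p) :
    Real.logb b (b + x + p) + 1 ≤ Real.logb b (p + b) + Real.logb b (b + x) := by
  have hb₀ : 0 < b := one_pos.trans hb
  have hprod : (b + x + p) * b ≤ (p + b) * (b + x) :=
    calc (b + x + p) * b ≤ (b + x + p) * b + p * x := le_add_of_nonneg_right (mul_nonneg hp hx)
      _ = (p + b) * (b + x) := by ring
  calc Real.logb b (b + x + p) + 1 = Real.logb b ((b + x + p) * b) := by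
        rw [Real.logb_mul (by positivity) hb₀.ne', Real.logb_self_eq_one hb]
    _ ≤ Real.logb b ((p + b) * (b + x)) := Real.logb_le_logb_of_le hb (by positivity) hprod
    _ = Real.logb b (p + b) + Real.logb b (b + x) :=
        Real.logb_mul (by positivity) (by positivity)

theorem half_logb_two_sub_half_le {x y : ℝ} (hx : 0 < x) (hxy : x ≤ y) :
    (1 / 2) * Real.logb 2 x - 1 / 2 ≤ (1 / 2) * Real.logb 2 y - 1 / 2 := by
  gcongr
  exact one_lt_two

theorem b21_nonneg {INR ρ : ℝ} (hI : 0 < INR) (hρ : ρ ≤ 1 - 1 / INR) : 0 ≤ b21 INR ρ := by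
  have hdiv : 1 / INR ≤ 1 - ρ := by linarith
  exact sub_nonneg.2 ((div_le_iff₀ hI).1 hdiv)

theorem b21_nonneg_and_b22_nonneg {INR12 INR21 ρ : ℝ} (h12 : 1 ≤ INR12) (h21 : 1 ≤ INR21)
    (hρ : ρ ≤ max (1 - max (1 / INR12) (1 / INR21)) 0) :
    0 ≤ b21 INR12 ρ ∧ 0 ≤ b22 INR21 ρ := by
  have h12₀ : 0 < INR12 := one_pos.trans_le h12
  have h21₀ : 0 < INR21 := one_pos.trans_le h21
  have hmax : max (1 / INR12) (1 / INR21) ≤ 1 :=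
    max_le ((div_le_one h12₀).2 h12) ((div_le_one h21₀).2 h21)
  rw [max_eq_left (sub_nonneg.2 hmax)] at hρ
  exact ⟨b21_nonneg h12₀ (hρ.trans (sub_le_sub_left (le_max_left _ _) 1)),
    b21_nonneg h21₀ (hρ.trans (sub_le_sub_left (le_max_right _ _) 1))⟩

section

variable {SNR1 INR12 INR21 ρ μ : ℝ}

theorem a11_le_a61 (hS : 0 ≤ SNR1) (hI : 0 < INR21) (hb : 0 ≤ b22 INR21 ρ) (hμ : μ ≤ 1) :
    a11 SNR1 INR21 ≤ a61 SNR1 INR21 ρ μ := by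
  have hx : 0 ≤ SNR1 / INR21 := div_nonneg hS hI.le
  have hp : 0 ≤ (1 - μ) * b22 INR21 ρ := mul_nonneg (sub_nonneg.2 hμ) hb
  refine half_logb_two_sub_half_le (by positivity) ?_
  rw [add_comm]
  gcongr
  exact le_mul_of_one_le_right hx (le_add_of_nonneg_left hp)

theorem a11_le_a51 (hS : 0 ≤ SNR1) (hI : 0 < INR21) (hb : 0 ≤ b21 INR12 ρ) (hμ : μ ≤ 1) :
    a11 SNR1 INR21 ≤ a51 SNR1 INR12 INR21 ρ μ :=
  half_logb_two_sub_half_le (by positivity)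
    (le_add_of_nonneg_right (mul_nonneg (sub_nonneg.2 hμ) hb))

theorem a51_le_a41_add_a11 (hS : 0 ≤ SNR1) (hI : 0 < INR21) (hb : 0 ≤ b21 INR12 ρ)
    (hμ : μ ≤ 1) : a51 SNR1 INR12 INR21 ρ μ ≤ a41 INR12 ρ μ + a11 SNR1 INR21 := by
  have hlog := logb_base_add_add_add_one_le one_lt_two (div_nonneg hS hI.le)
    (mul_nonneg (sub_nonneg.2 hμ) hb)
  unfold a51 a41 a11
  linarith

end

/-- The minimum `M` of the five retained sum-rate quantities. The terms `a_{2,i}(ρ)` and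
`a_{3,i}(ρ, μ_j)`, which cancel in every comparison with a discarded quantity, are replaced by
arbitrary reals `ci` and `fi`. -/
noncomputable def retainedSumRate (c1 c2 f1 f2 SNR1 SNR2 INR12 INR21 ρ μ1 μ2 : ℝ) : ℝ :=
  min (c1 + a12 SNR2 INR12)
    (min (a11 SNR1 INR21 + c2)
    (min (f1 + a11 SNR1 INR21 + f2 + a72 SNR2 INR12 INR21 ρ μ1 μ2)
    (min (f1 + a51 SNR1 INR12 INR21 ρ μ2 + f2 + a52 SNR2 INR12 INR21 ρ μ1)
         (f1 + a71 SNR1 INR12 INR21 ρ μ1 μ2 + f2 + a12 SNR2 INR12))))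

theorem sum_rate_bound_simplification_general
    (c1 c2 f1 f2 SNR1 SNR2 INR12 INR21 ρ μ1 μ2 : ℝ)
    (hS1 : 0 ≤ SNR1) (hS2 : 0 ≤ SNR2) (h12 : 0 < INR12) (h21 : 0 < INR21)
    (hb21 : 0 ≤ b21 INR12 ρ) (hb22 : 0 ≤ b22 INR21 ρ) (hμ1 : μ1 ≤ 1) (hμ2 : μ2 ≤ 1) :
    let M := retainedSumRate c1 c2 f1 f2 SNR1 SNR2 INR12 INR21 ρ μ1 μ2
    M ≤ c1 + a62 SNR2 INR12 ρ μ2 ∧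
    M ≤ a61 SNR1 INR21 ρ μ1 + c2 ∧
    M ≤ f1 + a41 INR12 ρ μ2 + a11 SNR1 INR21 + f2 + a52 SNR2 INR12 INR21 ρ μ1 ∧
    M ≤ f1 + a71 SNR1 INR12 INR21 ρ μ1 μ2 + f2 + a52 SNR2 INR12 INR21 ρ μ1 ∧
    M ≤ f1 + a51 SNR1 INR12 INR21 ρ μ2 + f2 + a42 INR21 ρ μ1 + a12 SNR2 INR12 ∧
    min (c1 + a12 SNR2 INR12)
      (min (a11 SNR1 INR21 + c2)
      (min (f1 + a11 SNR1 INR21 + f2 + a72 SNR2 INR12 INR21 ρ μ1 μ2)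
      (min (f1 + a51 SNR1 INR12 INR21 ρ μ2 + f2 + a52 SNR2 INR12 INR21 ρ μ1)
      (min (f1 + a71 SNR1 INR12 INR21 ρ μ1 μ2 + f2 + a12 SNR2 INR12)
      (min (c1 + a62 SNR2 INR12 ρ μ2)
      (min (a61 SNR1 INR21 ρ μ1 + c2)
      (min (f1 + a41 INR12 ρ μ2 + a11 SNR1 INR21 + f2 + a52 SNR2 INR12 INR21 ρ μ1)
      (min (f1 + a71 SNR1 INR12 INR21 ρ μ1 μ2 + f2 + a52 SNR2 INR12 INR21 ρ μ1)
           (f1 + a51 SNR1 INR12 INR21 ρ μ2 + f2 + a42 INR21 ρ μ1 + a12 SNR2 INR12)))))))))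
      = M := by
  intro M
  -- Exchanging the indices turns the user 1 functions into the user 2 functions definitionally.
  have h_a12_a62 : a12 SNR2 INR12 ≤ a62 SNR2 INR12 ρ μ2 := a11_le_a61 hS2 h12 hb21 hμ2
  have h_a11_a61 := a11_le_a61 hS1 h21 hb22 hμ1
  have h_a12_a52 : a12 SNR2 INR12 ≤ a52 SNR2 INR12 INR21 ρ μ1 := a11_le_a51 hS2 h12 hb22 hμ1
  have h_a51 := a51_le_a41_add_a11 hS1 h21 hb21 hμ2
  have h_a52 : a52 SNR2 INR12 INR21 ρ μ1 ≤ a42 INR21 ρ μ1 + a12 SNR2 INR12 :=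
    a51_le_a41_add_a11 hS2 h12 hb22 hμ1
  have hM_a62 : M ≤ c1 + a62 SNR2 INR12 ρ μ2 := min_le_of_left_le (by linarith)
  have hM_a61 : M ≤ a61 SNR1 INR21 ρ μ1 + c2 :=
    min_le_of_right_le (min_le_of_left_le (by linarith))
  have hM_a51_a52 : M ≤ f1 + a51 SNR1 INR12 INR21 ρ μ2 + f2 + a52 SNR2 INR12 INR21 ρ μ1 := by
    simp [M, retainedSumRate]
  have hM_a71_a12 : M ≤ f1 + a71 SNR1 INR12 INR21 ρ μ1 μ2 + f2 + a12 SNR2 INR12 := by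
    simp [M, retainedSumRate]
  have hM_a41 : M ≤ f1 + a41 INR12 ρ μ2 + a11 SNR1 INR21 + f2 + a52 SNR2 INR12 INR21 ρ μ1 :=
    hM_a51_a52.trans (by linarith)
  have hM_a71_a52 : M ≤ f1 + a71 SNR1 INR12 INR21 ρ μ1 μ2 + f2 + a52 SNR2 INR12 INR21 ρ μ1 :=
    hM_a71_a12.trans (by linarith)
  have hM_a42 : M ≤ f1 + a51 SNR1 INR12 INR21 ρ μ2 + f2 + a42 INR21 ρ μ1 + a12 SNR2 INR12 :=
    hM_a51_a52.trans (by linarith)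
  refine ⟨hM_a62, hM_a61, hM_a41, hM_a71_a52, hM_a42, ?_⟩
  have hM := min_eq_left (le_min hM_a62 (le_min hM_a61 (le_min hM_a41 (le_min hM_a71_a52 hM_a42))))
  simpa only [M, retainedSumRate, min_assoc] using hM

/-- Simplification of the achievable sum-rate bound: the minimum of the five
retained sum-rate terms `M` is not increased by the other five terms. -/
theorem sum_rate_bound_simplification
    (SNR1 SNR2 bSNR1 bSNR2 INR12 INR21 : ℝ)
    (hS1 : 0 < SNR1) (hS2 : 0 < SNR2) (hb1 : 0 < bSNR1) (hb2 : 0 < bSNR2)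
    (h12 : 1 < INR12) (h21 : 1 < INR21) :
    ∀ ρ ∈ Set.Icc (0 : ℝ) (max (1 - max (1 / INR12) (1 / INR21)) 0),
    ∀ μ1 ∈ Set.Icc (0 : ℝ) 1, ∀ μ2 ∈ Set.Icc (0 : ℝ) 1,
    (min (a21 SNR1 INR12 ρ + a12 SNR2 INR12)
      (min (a11 SNR1 INR21 + a22 SNR2 INR21 ρ)
      (min (a31 SNR1 bSNR1 INR12 ρ μ2 + a11 SNR1 INR21 + a32 SNR2 bSNR2 INR21 ρ μ1 +
              a72 SNR2 INR12 INR21 ρ μ1 μ2)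
      (min (a31 SNR1 bSNR1 INR12 ρ μ2 + a51 SNR1 INR12 INR21 ρ μ2 +
              a32 SNR2 bSNR2 INR21 ρ μ1 + a52 SNR2 INR12 INR21 ρ μ1)
           (a31 SNR1 bSNR1 INR12 ρ μ2 + a71 SNR1 INR12 INR21 ρ μ1 μ2 +
              a32 SNR2 bSNR2 INR21 ρ μ1 + a12 SNR2 INR12))))
      ≤ a21 SNR1 INR12 ρ + a62 SNR2 INR12 ρ μ2) ∧
    (min (a21 SNR1 INR12 ρ + a12 SNR2 INR12)
      (min (a11 SNR1 INR21 + a22 SNR2 INR21 ρ)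
      (min (a31 SNR1 bSNR1 INR12 ρ μ2 + a11 SNR1 INR21 + a32 SNR2 bSNR2 INR21 ρ μ1 +
              a72 SNR2 INR12 INR21 ρ μ1 μ2)
      (min (a31 SNR1 bSNR1 INR12 ρ μ2 + a51 SNR1 INR12 INR21 ρ μ2 +
              a32 SNR2 bSNR2 INR21 ρ μ1 + a52 SNR2 INR12 INR21 ρ μ1)
           (a31 SNR1 bSNR1 INR12 ρ μ2 + a71 SNR1 INR12 INR21 ρ μ1 μ2 +
              a32 SNR2 bSNR2 INR21 ρ μ1 + a12 SNR2 INR12))))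
      ≤ a61 SNR1 INR21 ρ μ1 + a22 SNR2 INR21 ρ) ∧
    (min (a21 SNR1 INR12 ρ + a12 SNR2 INR12)
      (min (a11 SNR1 INR21 + a22 SNR2 INR21 ρ)
      (min (a31 SNR1 bSNR1 INR12 ρ μ2 + a11 SNR1 INR21 + a32 SNR2 bSNR2 INR21 ρ μ1 +
              a72 SNR2 INR12 INR21 ρ μ1 μ2)
      (min (a31 SNR1 bSNR1 INR12 ρ μ2 + a51 SNR1 INR12 INR21 ρ μ2 +
              a32 SNR2 bSNR2 INR21 ρ μ1 + a52 SNR2 INR12 INR21 ρ μ1)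
           (a31 SNR1 bSNR1 INR12 ρ μ2 + a71 SNR1 INR12 INR21 ρ μ1 μ2 +
              a32 SNR2 bSNR2 INR21 ρ μ1 + a12 SNR2 INR12))))
      ≤ a31 SNR1 bSNR1 INR12 ρ μ2 + a41 INR12 ρ μ2 + a11 SNR1 INR21 +
          a32 SNR2 bSNR2 INR21 ρ μ1 + a52 SNR2 INR12 INR21 ρ μ1) ∧
    (min (a21 SNR1 INR12 ρ + a12 SNR2 INR12)
      (min (a11 SNR1 INR21 + a22 SNR2 INR21 ρ)
      (min (a31 SNR1 bSNR1 INR12 ρ μ2 + a11 SNR1 INR21 + a32 SNR2 bSNR2 INR21 ρ μ1 +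
              a72 SNR2 INR12 INR21 ρ μ1 μ2)
      (min (a31 SNR1 bSNR1 INR12 ρ μ2 + a51 SNR1 INR12 INR21 ρ μ2 +
              a32 SNR2 bSNR2 INR21 ρ μ1 + a52 SNR2 INR12 INR21 ρ μ1)
           (a31 SNR1 bSNR1 INR12 ρ μ2 + a71 SNR1 INR12 INR21 ρ μ1 μ2 +
              a32 SNR2 bSNR2 INR21 ρ μ1 + a12 SNR2 INR12))))
      ≤ a31 SNR1 bSNR1 INR12 ρ μ2 + a71 SNR1 INR12 INR21 ρ μ1 μ2 +
          a32 SNR2 bSNR2 INR21 ρ μ1 + a52 SNR2 INR12 INR21 ρ μ1) ∧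
    (min (a21 SNR1 INR12 ρ + a12 SNR2 INR12)
      (min (a11 SNR1 INR21 + a22 SNR2 INR21 ρ)
      (min (a31 SNR1 bSNR1 INR12 ρ μ2 + a11 SNR1 INR21 + a32 SNR2 bSNR2 INR21 ρ μ1 +
              a72 SNR2 INR12 INR21 ρ μ1 μ2)
      (min (a31 SNR1 bSNR1 INR12 ρ μ2 + a51 SNR1 INR12 INR21 ρ μ2 +
              a32 SNR2 bSNR2 INR21 ρ μ1 + a52 SNR2 INR12 INR21 ρ μ1)
           (a31 SNR1 bSNR1 INR12 ρ μ2 + a71 SNR1 INR12 INR21 ρ μ1 μ2 +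
              a32 SNR2 bSNR2 INR21 ρ μ1 + a12 SNR2 INR12))))
      ≤ a31 SNR1 bSNR1 INR12 ρ μ2 + a51 SNR1 INR12 INR21 ρ μ2 +
          a32 SNR2 bSNR2 INR21 ρ μ1 + a42 INR21 ρ μ1 + a12 SNR2 INR12) ∧
    (min (a21 SNR1 INR12 ρ + a12 SNR2 INR12)
      (min (a11 SNR1 INR21 + a22 SNR2 INR21 ρ)
      (min (a31 SNR1 bSNR1 INR12 ρ μ2 + a11 SNR1 INR21 + a32 SNR2 bSNR2 INR21 ρ μ1 +
              a72 SNR2 INR12 INR21 ρ μ1 μ2)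
      (min (a31 SNR1 bSNR1 INR12 ρ μ2 + a51 SNR1 INR12 INR21 ρ μ2 +
              a32 SNR2 bSNR2 INR21 ρ μ1 + a52 SNR2 INR12 INR21 ρ μ1)
      (min (a31 SNR1 bSNR1 INR12 ρ μ2 + a71 SNR1 INR12 INR21 ρ μ1 μ2 +
              a32 SNR2 bSNR2 INR21 ρ μ1 + a12 SNR2 INR12)
      (min (a21 SNR1 INR12 ρ + a62 SNR2 INR12 ρ μ2)
      (min (a61 SNR1 INR21 ρ μ1 + a22 SNR2 INR21 ρ)
      (min (a31 SNR1 bSNR1 INR12 ρ μ2 + a41 INR12 ρ μ2 + a11 SNR1 INR21 +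
              a32 SNR2 bSNR2 INR21 ρ μ1 + a52 SNR2 INR12 INR21 ρ μ1)
      (min (a31 SNR1 bSNR1 INR12 ρ μ2 + a71 SNR1 INR12 INR21 ρ μ1 μ2 +
              a32 SNR2 bSNR2 INR21 ρ μ1 + a52 SNR2 INR12 INR21 ρ μ1)
           (a31 SNR1 bSNR1 INR12 ρ μ2 + a51 SNR1 INR12 INR21 ρ μ2 +
              a32 SNR2 bSNR2 INR21 ρ μ1 + a42 INR21 ρ μ1 + a12 SNR2 INR12)))))))))
      = min (a21 SNR1 INR12 ρ + a12 SNR2 INR12)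
          (min (a11 SNR1 INR21 + a22 SNR2 INR21 ρ)
          (min (a31 SNR1 bSNR1 INR12 ρ μ2 + a11 SNR1 INR21 + a32 SNR2 bSNR2 INR21 ρ μ1 +
                  a72 SNR2 INR12 INR21 ρ μ1 μ2)
          (min (a31 SNR1 bSNR1 INR12 ρ μ2 + a51 SNR1 INR12 INR21 ρ μ2 +
                  a32 SNR2 bSNR2 INR21 ρ μ1 + a52 SNR2 INR12 INR21 ρ μ1)
               (a31 SNR1 bSNR1 INR12 ρ μ2 + a71 SNR1 INR12 INR21 ρ μ1 μ2 +
                  a32 SNR2 bSNR2 INR21 ρ μ1 + a12 SNR2 INR12))))) := by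
  intro ρ hρ μ1 hμ1 μ2 hμ2
  obtain ⟨hb21, hb22⟩ := b21_nonneg_and_b22_nonneg h12.le h21.le hρ.2
  exact sum_rate_bound_simplification_general (a21 SNR1 INR12 ρ) (a22 SNR2 INR21 ρ)
    (a31 SNR1 bSNR1 INR12 ρ μ2) (a32 SNR2 bSNR2 INR21 ρ μ1) SNR1 SNR2 INR12 INR21 ρ μ1 μ2
    hS1.le hS2.le (one_pos.trans h12) (one_pos.trans h21) hb21 hb22 hμ1.2 hμ2.2
end

section
/- Fix real numbers SNR1, SNR2 > 0, bSNR1, bSNR2 > 0, and INR12, INR21 > 1. For each i ∈ {1,2} (j the other index), the function ρ ↦ κ_{3,i}(ρ) = (1/2)·log((b_{4,i}(ρ)+b_{5,j}(ρ)+1)·bSNR_j/((b_{1,j}(1)+1)·(b_{4,i}(ρ)+1)) + 1) + (1/2)·log(b_{4,i}(ρ)+1) is monotonically nonincreasing on the interval [0,1]. -/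
/-!
The two logarithms merge: with `N = (b₄ + b₅ + 1) · bSNR / (b₁(1) + 1)` and `D = b₄ + 1`, their
arguments are `N / D + 1` and `D`, whose product is `N + D`. The quotient, in which numerator and
denominator both decrease with `ρ`, thus disappears, and `N + D` is a nondecreasing function
of `1 - ρ²`.
-/

theorem logb_div_add_one_add_logb {b N D : ℝ} (hD : D ≠ 0) (hND : N + D ≠ 0) :
    Real.logb b (N / D + 1) + Real.logb b D = Real.logb b (N + D) := by
  rw [div_add_one hD, Real.logb_div hND hD, sub_add_cancel]

/-- The converse bound `κ_{3,i}(ρ)`, with `S = SNR_i`, `I = INR_ji`, `B = bSNR_j` and the constant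
`b_{1,j}(1) + 1`, which does not depend on `ρ`, as the separate parameter `C`. -/
noncomputable def kappa3 (S I B C ρ : ℝ) : ℝ :=
  (1/2) * Real.logb 2
    ((((1 - ρ^2) * S + (1 - ρ^2) * I + 1) * B) / (C * ((1 - ρ^2) * S + 1)) + 1) +
  (1/2) * Real.logb 2 ((1 - ρ^2) * S + 1)

section

variable {S I B C : ℝ}

theorem kappa3_eq_half_mul_logb {ρ : ℝ} (hS : 0 ≤ S) (hI : 0 ≤ I) (hB : 0 ≤ B) (hC : 0 ≤ C)
    (hρ : ρ ^ 2 ≤ 1) :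
    kappa3 S I B C ρ = (1/2) * Real.logb 2
      (((1 - ρ^2) * S + (1 - ρ^2) * I + 1) * B / C + ((1 - ρ^2) * S + 1)) := by
  have : 0 ≤ 1 - ρ^2 := sub_nonneg.2 hρ
  have hD : 0 < (1 - ρ^2) * S + 1 := by positivity
  have hN : 0 ≤ ((1 - ρ^2) * S + (1 - ρ^2) * I + 1) * B / C := by positivity
  rw [kappa3, ← mul_add, ← div_div,
    logb_div_add_one_add_logb hD.ne' (add_pos_of_nonneg_of_pos hN hD).ne']

theorem kappa3_antitone_general (hS : 0 ≤ S) (hI : 0 ≤ I) (hB : 0 ≤ B) (hC : 0 < C) :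
    AntitoneOn (kappa3 S I B C) (Set.Icc 0 1) := by
  rintro x ⟨hx_nonneg, hx_le⟩ y ⟨hy_nonneg, hy_le⟩ hxy
  have hx_sq : x^2 ≤ 1 := pow_le_one₀ hx_nonneg hx_le
  have hy_sq : y^2 ≤ 1 := pow_le_one₀ hy_nonneg hy_le
  have : 0 ≤ 1 - y^2 := sub_nonneg.2 hy_sq
  rw [kappa3_eq_half_mul_logb hS hI hB hC.le hx_sq, kappa3_eq_half_mul_logb hS hI hB hC.le hy_sq]
  refine mul_le_mul_of_nonneg_left
    (Real.logb_le_logb_of_le one_lt_two (by positivity) ?_) one_half_pos.le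
  gcongr

end

/-- For each `i ∈ {1,2}`, the converse bound `κ_{3,i}` is a monotonically
nonincreasing function of `ρ` on `[0,1]`. -/
theorem kappa3_antitone
    (SNR1 SNR2 bSNR1 bSNR2 INR12 INR21 : ℝ)
    (hS1 : 0 < SNR1) (hS2 : 0 < SNR2) (hb1 : 0 < bSNR1) (hb2 : 0 < bSNR2)
    (h12 : 1 < INR12) (h21 : 1 < INR21) :
    AntitoneOn (fun ρ : ℝ =>
      (1/2) * Real.logb 2
        ((((1 - ρ^2) * SNR1 + (1 - ρ^2) * INR21 + 1) * bSNR2) /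
          ((SNR2 + 2 * Real.sqrt (SNR2 * INR21) + INR21 + 1) * ((1 - ρ^2) * SNR1 + 1)) + 1) +
      (1/2) * Real.logb 2 ((1 - ρ^2) * SNR1 + 1)) (Set.Icc (0 : ℝ) 1) ∧
    AntitoneOn (fun ρ : ℝ =>
      (1/2) * Real.logb 2
        ((((1 - ρ^2) * SNR2 + (1 - ρ^2) * INR12 + 1) * bSNR1) /
          ((SNR1 + 2 * Real.sqrt (SNR1 * INR12) + INR12 + 1) * ((1 - ρ^2) * SNR2 + 1)) + 1) +
      (1/2) * Real.logb 2 ((1 - ρ^2) * SNR2 + 1)) (Set.Icc (0 : ℝ) 1) := by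
  have hI12 : 0 < INR12 := zero_lt_one.trans h12
  have hI21 : 0 < INR21 := zero_lt_one.trans h21
  exact ⟨kappa3_antitone_general hS1.le hI21.le hb2.le (by positivity),
    kappa3_antitone_general hS2.le hI12.le hb1.le (by positivity)⟩
end

section
/- Fix real numbers SNR1, SNR2 > 0, bSNR2 > 0, and INR21 > 1. For every ρ ∈ [0,1], κ_{3,1}(ρ) = (1/2)·log((b_{4,1}(ρ)+b_{5,2}(ρ)+1)·bSNR2/((b_{1,2}(1)+1)·(b_{4,1}(ρ)+1)) + 1) + (1/2)·log(b_{4,1}(ρ)+1) ≤ (1/2)·log(bSNR2·(SNR1 + INR21 + 1)/(SNR2 + INR21 + 1) + SNR1 + 1). -/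
/-!
Merging the two logarithms of `κ_{3,1}(ρ)` clears the factor `b_{4,1}(ρ) + 1` from the denominator,
leaving the logarithm of
`(b_{4,1}(ρ) + b_{5,2}(ρ) + 1) * bSNR2 / (b_{1,2}(1) + 1) + b_{4,1}(ρ) + 1`.
Here `b_{4,1}(ρ)` and `b_{5,2}(ρ)` are largest at `ρ = 0`, and discarding the cross term
`2 * √(SNR2 * INR21)` of `b_{1,2}(1)` only decreases the denominator.
-/

lemma logb_div_mul_add_one_add_logb {b x c y : ℝ} (hy : y ≠ 0) (h : x / (c * y) + 1 ≠ 0) :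
    Real.logb b (x / (c * y) + 1) + Real.logb b y = Real.logb b (x / c + y) := by
  rw [← Real.logb_mul h hy, add_mul, one_mul, ← div_div, div_mul_cancel₀ _ hy]

lemma scaled_sum_mul_div_add_le {K : Type*} [Field K] [LinearOrder K] [IsStrictOrderedRing K]
    {t s i β d D : K} (ht : t ≤ 1) (hs : 0 ≤ s) (hi : 0 ≤ i) (hβ : 0 ≤ β)
    (hd : 0 < d) (hD : d ≤ D) :
    (t * s + t * i + 1) * β / D + (t * s + 1) ≤ β * (s + i + 1) / d + s + 1 := by
  have hts : t * s ≤ s := mul_le_of_le_one_left hs ht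
  have hti : t * i ≤ i := mul_le_of_le_one_left hi ht
  have hquot : (t * s + t * i + 1) * β / D ≤ β * (s + i + 1) / d := by
    rw [mul_comm]
    gcongr
  linarith

theorem kappa31_upper_bound_general
    {SNR1 SNR2 bSNR2 INR21 ρ : ℝ}
    (hS1 : 0 ≤ SNR1) (hS2 : 0 ≤ SNR2) (hb2 : 0 ≤ bSNR2) (h21 : 0 ≤ INR21)
    (hρ : ρ ∈ Set.Icc (-1 : ℝ) 1) :
    (1/2) * Real.logb 2
      ((((1 - ρ^2) * SNR1 + (1 - ρ^2) * INR21 + 1) * bSNR2) /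
        (((SNR2 + 2 * Real.sqrt (SNR2 * INR21) + INR21) + 1) * ((1 - ρ^2) * SNR1 + 1)) + 1) +
      (1/2) * Real.logb 2 ((1 - ρ^2) * SNR1 + 1) ≤
      (1/2) * Real.logb 2
        (bSNR2 * (SNR1 + INR21 + 1) / (SNR2 + INR21 + 1) + SNR1 + 1) := by
  have ht₀ : 0 ≤ 1 - ρ ^ 2 := sub_nonneg.2 ((sq_le_one_iff_abs_le_one ρ).2 (abs_le.2 hρ))
  have ht₁ : 1 - ρ ^ 2 ≤ 1 := sub_le_self 1 (sq_nonneg ρ)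
  have hcross : 0 ≤ Real.sqrt (SNR2 * INR21) := Real.sqrt_nonneg _
  rw [← mul_add, logb_div_mul_add_one_add_logb (by positivity) (by positivity)]
  refine mul_le_mul_of_nonneg_left ?_ (by norm_num)
  refine Real.logb_le_logb_of_le one_lt_two (by positivity) ?_
  exact scaled_sum_mul_div_add_le ht₁ hS1 h21 hb2 (by positivity) (by linarith)

/-- Upper bound on the converse bound `κ_{3,1}(ρ)` for `ρ ∈ [0,1]`. -/
theorem kappa31_upper_bound
    (SNR1 SNR2 bSNR2 INR21 : ℝ)
    (hS1 : 0 < SNR1) (hS2 : 0 < SNR2) (hb2 : 0 < bSNR2) (h21 : 1 < INR21) :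
    ∀ ρ ∈ Set.Icc (0 : ℝ) 1,
    (1/2) * Real.logb 2
      ((((1 - ρ^2) * SNR1 + (1 - ρ^2) * INR21 + 1) * bSNR2) /
        (((SNR2 + 2 * Real.sqrt (SNR2 * INR21) + INR21) + 1) * ((1 - ρ^2) * SNR1 + 1)) + 1) +
      (1/2) * Real.logb 2 ((1 - ρ^2) * SNR1 + 1) ≤
      (1/2) * Real.logb 2
        (bSNR2 * (SNR1 + INR21 + 1) / (SNR2 + INR21 + 1) + SNR1 + 1) :=
  fun _ hρ => kappa31_upper_bound_general hS1.le hS2.le hb2.le (zero_le_one.trans h21.le)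
    (Set.Icc_subset_Icc_left neg_one_lt_zero.le hρ)
end

section
/- Fix real numbers SNR1 > 0 and INR21 ≥ 1. Then a_{1,1} + a_{4,2}(0,0) ≥ (1/2)·log(SNR1 + INR21 + 1) − 1, where a_{1,1} = (1/2)·log(2 + SNR1/INR21) − 1/2 and a_{4,2}(0,0) = (1/2)·log(INR21 + 1) − 1/2. -/
theorem add_add_one_lt_two_add_div_mul_add_one {K : Type*} [Field K] [LinearOrder K]
    [IsStrictOrderedRing K] {s i : K} (hs : 0 ≤ s) (hi : 0 < i) :
    s + i + 1 < (2 + s / i) * (i + 1) :=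
  calc
    s + i + 1 < s + i + 1 + (s / i + i + 1) := lt_add_of_pos_right _ (by positivity)
    _ = (2 + s / i) * (i + 1) := by field

theorem logb_add_add_one_lt_logb_two_add_div_add_logb_add_one {b s i : ℝ} (hb : 1 < b)
    (hs : 0 ≤ s) (hi : 0 < i) :
    Real.logb b (s + i + 1) < Real.logb b (2 + s / i) + Real.logb b (i + 1) :=
  calc
    Real.logb b (s + i + 1) < Real.logb b ((2 + s / i) * (i + 1)) :=
      Real.logb_lt_logb hb (by positivity) (add_add_one_lt_two_add_div_mul_add_one hs hi)
    _ = Real.logb b (2 + s / i) + Real.logb b (i + 1) :=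
      Real.logb_mul (by positivity) (by positivity)

theorem a11_add_a42_lower_bound_general
    (SNR1 INR21 : ℝ) (hS1 : 0 ≤ SNR1) (h21 : 0 < INR21) :
    (1/2) * Real.logb 2 (SNR1 + INR21 + 1) - 1 <
      ((1/2) * Real.logb 2 (2 + SNR1 / INR21) - 1/2) +
        ((1/2) * Real.logb 2 (INR21 + 1) - 1/2) := by
  linarith [logb_add_add_one_lt_logb_two_add_div_add_logb_add_one one_lt_two hS1 h21]

/-- Lower bound on the achievable bound `a_{1,1} + a_{4,2}(0,0)`. -/
theorem a11_add_a42_lower_bound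
    (SNR1 INR21 : ℝ) (hS1 : 0 < SNR1) (h21 : 1 ≤ INR21) :
    ((1/2) * Real.logb 2 (2 + SNR1 / INR21) - 1/2) +
      ((1/2) * Real.logb 2 (INR21 + 1) - 1/2) ≥
      (1/2) * Real.logb 2 (SNR1 + INR21 + 1) - 1 :=
  (a11_add_a42_lower_bound_general SNR1 INR21 hS1.le (zero_lt_one.trans_le h21)).le
end

section
/- Fix real numbers SNR1, SNR2 > 0 and INR21 > 1 with SNR1 ≥ INR21. For every ρ ∈ [0,1], κ_{2,1}(ρ) − a_{6,1}(0,0) ≤ 1, where κ_{2,1}(ρ) = (1/2)·log(1+b_{5,2}(ρ)) + (1/2)·log(1 + b_{4,1}(ρ)/(1+b_{5,2}(ρ))) and a_{6,1}(0,0) = (1/2)·log(SNR1 + 2) − 1/2. -/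
/-!
By the chain rule for logarithms, `κ_{2,1}(ρ) = (1/2) log (1 + (1 - ρ²)(INR21 + SNR1))`. Since
`0 ≤ 1 - ρ² ≤ 1`, the argument is at most `1 + INR21 + SNR1`, which is at most `2 (SNR1 + 2)` as
soon as `INR21 ≤ SNR1 + 3`. So `κ_{2,1}(ρ)` exceeds `(1/2) log (SNR1 + 2)` by at most `1/2`; the
other `1/2` is the constant term of `a_{6,1}(0,0)`.
-/

open Real

theorem logb_add_logb_one_add_div (b : ℝ) {x y : ℝ} (hx : x ≠ 0) (hxy : x + y ≠ 0) :
    logb b x + logb b (1 + y / x) = logb b (x + y) := by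
  have factor : x * (1 + y / x) = x + y := by field_simp
  rw [← logb_mul hx (right_ne_zero_of_mul (factor.trans_ne hxy)), factor]

theorem logb_le_one_add_logb {b x y : ℝ} (hb : 1 < b) (hx : 0 < x) (hxy : x ≤ b * y) :
    logb b x ≤ 1 + logb b y := by
  have hb₀ : 0 < b := one_pos.trans hb
  have hy : 0 < y := pos_of_mul_pos_right (hx.trans_le hxy) hb₀.le
  calc logb b x ≤ logb b (b * y) := logb_le_logb_of_le hb hx hxy
    _ = 1 + logb b y := by rw [logb_mul hb₀.ne' hy.ne', logb_self_eq_one hb]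

theorem kappa21_sub_a61_le_one_general {SNR1 INR21 ρ : ℝ} (hSNR : 0 ≤ SNR1) (hINR : 0 ≤ INR21)
    (hle : INR21 ≤ SNR1 + 3) (hρ : |ρ| ≤ 1) :
    ((1/2) * logb 2 (1 + (1 - ρ^2) * INR21) +
      (1/2) * logb 2 (1 + ((1 - ρ^2) * SNR1) / (1 + (1 - ρ^2) * INR21))) -
      ((1/2) * logb 2 (SNR1 + 2) - 1/2) ≤ 1 := by
  have hr₀ : 0 ≤ 1 - ρ^2 := sub_nonneg.2 ((sq_le_one_iff_abs_le_one ρ).2 hρ)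
  have hr₁ : 1 - ρ^2 ≤ 1 := sub_le_self 1 (sq_nonneg ρ)
  have hb : 0 < 1 + (1 - ρ^2) * INR21 := by positivity
  have hba : 0 < 1 + (1 - ρ^2) * INR21 + (1 - ρ^2) * SNR1 := by positivity
  have hbound : 1 + (1 - ρ^2) * INR21 + (1 - ρ^2) * SNR1 ≤ 2 * (SNR1 + 2) := by
    linarith [mul_le_of_le_one_left hINR hr₁, mul_le_of_le_one_left hSNR hr₁]
  have hchain := logb_add_logb_one_add_div 2 hb.ne' hba.ne'
  have hgap := logb_le_one_add_logb one_lt_two hba hbound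
  linarith

/-- Case 1.1.1 of the gap analysis: `κ_{2,1}(ρ) − a_{6,1}(0,0) ≤ 1` when `SNR1 ≥ INR21`. -/
theorem kappa21_sub_a61_le_one
    (SNR1 SNR2 INR21 : ℝ)
    (hS1 : 0 < SNR1) (hS2 : 0 < SNR2) (h21 : 1 < INR21) (hSI : SNR1 ≥ INR21) :
    ∀ ρ ∈ Set.Icc (0 : ℝ) 1,
    ((1/2) * Real.logb 2 (1 + (1 - ρ^2) * INR21) +
      (1/2) * Real.logb 2 (1 + ((1 - ρ^2) * SNR1) / (1 + (1 - ρ^2) * INR21))) -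
      ((1/2) * Real.logb 2 (SNR1 + 2) - 1/2) ≤ 1 := fun _ hρ ↦
  kappa21_sub_a61_le_one_general hS1.le (by linarith) (by linarith)
    ((abs_of_nonneg hρ.1).trans_le hρ.2)
end

section
/- Fix real numbers SNR1, SNR2 > 0, bSNR2 > 0, and INR21 > 1, and assume bSNR2 ≤ SNR1 and SNR1 ≤ SNR2. For every ρ ∈ [0,1], κ_{3,1}(ρ) − a_{6,1}(0,0) ≤ 1, where κ_{3,1}(ρ) = (1/2)·log((b_{4,1}(ρ)+b_{5,2}(ρ)+1)·bSNR2/((b_{1,2}(1)+1)·(b_{4,1}(ρ)+1)) + 1) + (1/2)·log(b_{4,1}(ρ)+1) and a_{6,1}(0,0) = (1/2)·log(SNR1 + 2) − 1/2. -/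
/-!
The two logarithms of `κ_{3,1}` add up to that of `(N·bSNR2 / (D·A) + 1)·A = (N / D)·bSNR2 + A`,
where `A = b_{4,1}(ρ) + 1`, `N = b_{4,1}(ρ) + b_{5,2}(ρ) + 1` and `D = b_{1,2}(1) + 1`.
Since `SNR1 ≤ SNR2 + 2·√(SNR2·INR21)`, `N ≤ D` at `ρ = 0`, hence for every `ρ`, so the argument is
at most `bSNR2 + SNR1 + 1`. A gap of one bit to `a_{6,1}(0,0)` allows it to be `2·(SNR1 + 2)`, which
leaves room for `bSNR2` up to `SNR1 + 3`.
-/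

theorem mul_div_mul_add_one_mul_le_add {N D A b : ℝ}
    (hD : 0 ≤ D) (hND : N ≤ D) (hA : A ≠ 0) (hb : 0 ≤ b) :
    (N * b / (D * A) + 1) * A ≤ b + A :=
  calc (N * b / (D * A) + 1) * A = N / D * b + A := by field_simp
    _ ≤ b + A := by
      gcongr
      exact mul_le_of_le_one_left hb (div_le_one_of_le₀ hND hD)

theorem half_logb_two_add_sub_le_one_of_mul_le {x y z : ℝ} (hx : 0 < x) (hy : 0 < y)
    (hxy : x * y ≤ 2 * z) :
    ((1/2) * Real.logb 2 x + (1/2) * Real.logb 2 y) - ((1/2) * Real.logb 2 z - 1/2) ≤ 1 := by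
  have hz : 0 < z := pos_of_mul_pos_right ((mul_pos hx hy).trans_le hxy) zero_le_two
  have hlog : Real.logb 2 x + Real.logb 2 y ≤ 1 + Real.logb 2 z :=
    calc Real.logb 2 x + Real.logb 2 y = Real.logb 2 (x * y) :=
          (Real.logb_mul hx.ne' hy.ne').symm
      _ ≤ Real.logb 2 (2 * z) := Real.logb_le_logb_of_le one_lt_two (mul_pos hx hy) hxy
      _ = 1 + Real.logb 2 z := by
          rw [Real.logb_mul two_ne_zero hz.ne', Real.logb_self_eq_one one_lt_two]
  linarith

theorem kappa31_sub_a61_le_one_general {SNR1 SNR2 bSNR2 INR21 ρ : ℝ}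
    (hSNR1 : 0 ≤ SNR1) (hINR21 : 0 ≤ INR21) (hbSNR2 : 0 ≤ bSNR2)
    (hb_le : bSNR2 ≤ SNR1 + 3) (hSNR1_le : SNR1 ≤ SNR2 + 2 * Real.sqrt (SNR2 * INR21))
    (hρ : |ρ| ≤ 1) :
    ((1/2) * Real.logb 2
      ((((1 - ρ^2) * SNR1 + (1 - ρ^2) * INR21 + 1) * bSNR2) /
        (((SNR2 + 2 * Real.sqrt (SNR2 * INR21) + INR21) + 1) * ((1 - ρ^2) * SNR1 + 1)) + 1) +
      (1/2) * Real.logb 2 ((1 - ρ^2) * SNR1 + 1)) -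
      ((1/2) * Real.logb 2 (SNR1 + 2) - 1/2) ≤ 1 := by
  have hcoeff_nonneg : 0 ≤ 1 - ρ^2 := sub_nonneg.2 ((sq_le_one_iff_abs_le_one ρ).2 hρ)
  have hcoeff_le_one : 1 - ρ^2 ≤ 1 := sub_le_self 1 (sq_nonneg ρ)
  have hsignal : (1 - ρ^2) * SNR1 ≤ SNR1 := mul_le_of_le_one_left hSNR1 hcoeff_le_one
  have hinterference : (1 - ρ^2) * INR21 ≤ INR21 := mul_le_of_le_one_left hINR21 hcoeff_le_one
  have hA : 0 < (1 - ρ^2) * SNR1 + 1 := by positivity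
  have hD : 0 < SNR2 + 2 * Real.sqrt (SNR2 * INR21) + INR21 + 1 := by linarith
  apply half_logb_two_add_sub_le_one_of_mul_le (by positivity) hA
  calc
    _ ≤ bSNR2 + ((1 - ρ^2) * SNR1 + 1) :=
      mul_div_mul_add_one_mul_le_add hD.le (by linarith) hA.ne' hbSNR2
    _ ≤ 2 * (SNR1 + 2) := by linarith

/-- Case 1.1.2 / 1.1.3.2 of the gap analysis:
`κ_{3,1}(ρ) − a_{6,1}(0,0) ≤ 1` when `bSNR2 ≤ SNR1` and `SNR1 ≤ SNR2`. -/
theorem kappa31_sub_a61_le_one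
    (SNR1 SNR2 bSNR2 INR21 : ℝ)
    (hS1 : 0 < SNR1) (hS2 : 0 < SNR2) (hb2 : 0 < bSNR2) (h21 : 1 < INR21)
    (hbS : bSNR2 ≤ SNR1) (hSS : SNR1 ≤ SNR2) :
    ∀ ρ ∈ Set.Icc (0 : ℝ) 1,
    ((1/2) * Real.logb 2
      ((((1 - ρ^2) * SNR1 + (1 - ρ^2) * INR21 + 1) * bSNR2) /
        (((SNR2 + 2 * Real.sqrt (SNR2 * INR21) + INR21) + 1) * ((1 - ρ^2) * SNR1 + 1)) + 1) +
      (1/2) * Real.logb 2 ((1 - ρ^2) * SNR1 + 1)) -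
      ((1/2) * Real.logb 2 (SNR1 + 2) - 1/2) ≤ 1 := by
  intro ρ hρ
  have hSNR1_le : SNR1 ≤ SNR2 + 2 * Real.sqrt (SNR2 * INR21) :=
    hSS.trans (le_add_of_nonneg_right (by positivity))
  exact kappa31_sub_a61_le_one_general hS1.le (zero_lt_one.trans h21).le hb2.le (by linarith)
    hSNR1_le ((abs_of_nonneg hρ.1).trans_le hρ.2)
end

section
/- Fix real numbers SNR1, SNR2 > 0, bSNR1, bSNR2 > 0, and INR12, INR21 > 1, and assume the high-interference and feedback conditions of Case 1.1: INR12 > SNR1, INR21 > SNR2, bSNR2 ≤ SNR1, and bSNR1 ≤ SNR2. Then for every ρ' ∈ [0,1], min(κ_{1,1}(ρ'), κ_{2,1}(ρ'), κ_{3,1}(ρ')) − min(a_{2,1}(0), a_{6,1}(0,0) + a_{3,2}(0,0), a_{1,1} + a_{3,2}(0,0) + a_{4,2}(0,0)) ≤ 3/2. (Here a_{3,2}(0,0) = 0, a_{2,1}(0) = (1/2)·log(SNR1+INR12+1) − 1/2, a_{6,1}(0,0) = (1/2)·log(SNR1+2) − 1/2, a_{1,1} = (1/2)·log(2+SNR1/INR21)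 − 1/2, and a_{4,2}(0,0) = (1/2)·log(INR21+1) − 1/2.) -/
/-!
By the chain rule `C(y) + C(x / (1 + y)) = C(x + y)` for the Gaussian capacity
`C(x) = log(1 + x) / 2`, each of the converse bounds `κ` is a single capacity, and multiplying
`1 + x` by at most `2 ^ c` raises `C(x)` by at most `c / 2`. Coherent combining at most doubles the
received power, so `κ₁` exceeds `a₂₁` by at most one bit, and `κ₂` exceeds `a₁₁ + a₄₂` by at most
one bit term by term. For `a₆₁`, either `INR21 ≤ SNR1` and the sum power in `κ₂` is at most
`2 * SNR1`, or `SNR1 ≤ INR21` and the weak feedback limits the power in `κ₃` to `3 * SNR1`.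
-/

/-- The capacity, in bits per channel use, of the real Gaussian channel with signal-to-noise
ratio `x`. -/
noncomputable def gaussianCapacity (x : ℝ) : ℝ :=
  (1/2) * Real.logb 2 (x + 1)

theorem gaussianCapacity_le_add {x y c : ℝ} (hx : 0 ≤ x) (h : x + 1 ≤ 2 ^ c * (y + 1)) :
    gaussianCapacity x ≤ gaussianCapacity y + c / 2 := by
  have hy : 0 < y + 1 := pos_of_mul_pos_right (by linarith) (Real.rpow_nonneg zero_le_two c)
  have hlog : Real.logb 2 (x + 1) ≤ c + Real.logb 2 (y + 1) := calc
    Real.logb 2 (x + 1) ≤ Real.logb 2 (2 ^ c * (y + 1)) :=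
      Real.logb_le_logb_of_le one_lt_two (by linarith) h
    _ = c + Real.logb 2 (y + 1) := by
      rw [Real.logb_mul (by positivity) hy.ne', Real.logb_rpow two_pos (by norm_num)]
  unfold gaussianCapacity
  linarith

theorem gaussianCapacity_mono {x y : ℝ} (hx : 0 ≤ x) (h : x ≤ y) :
    gaussianCapacity x ≤ gaussianCapacity y := by
  simpa using gaussianCapacity_le_add (c := 0) hx (by simpa using h)

theorem gaussianCapacity_div_add {x y : ℝ} (hx : 0 ≤ x) (hy : 0 ≤ y) :
    gaussianCapacity (x / (y + 1)) + gaussianCapacity y = gaussianCapacity (x + y) := by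
  unfold gaussianCapacity
  rw [← mul_add, ← Real.logb_mul (by positivity) (by positivity)]
  congr 2
  field_simp
  ring

/-- The power `b₁,ᵢ(ρ)` received from two signals of powers `S` and `I` with correlation
coefficient `ρ`. -/
noncomputable def receivedPower (S I ρ : ℝ) : ℝ :=
  S + 2 * ρ * Real.sqrt (S * I) + I

/-- The power of the part of a signal of power `P` that is uncorrelated with a signal with which
it has correlation coefficient `ρ`: the paper's `b₄,₁(ρ)` for `P = SNR1` and `b₅,₂(ρ)` for
`P = INR21`. -/
def uncorrelatedPower (P ρ : ℝ) : ℝ :=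
  (1 - ρ^2) * P

section Power

variable {S I P ρ : ℝ}

theorem abs_receivedPower_sub_add_le (hS : 0 ≤ S) (hI : 0 ≤ I) (hρ : |ρ| ≤ 1) :
    |receivedPower S I ρ - (S + I)| ≤ S + I := by
  have amgm : 2 * Real.sqrt (S * I) ≤ S + I := by
    simpa [Real.sqrt_mul hS, Real.sq_sqrt hS, Real.sq_sqrt hI, mul_assoc] using
      two_mul_le_add_sq (Real.sqrt S) (Real.sqrt I)
  calc |receivedPower S I ρ - (S + I)| = |ρ| * (2 * Real.sqrt (S * I)) := by
        rw [← abs_of_nonneg (by positivity : 0 ≤ 2 * Real.sqrt (S * I)), ← abs_mul]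
        unfold receivedPower
        ring_nf
    _ ≤ 1 * (S + I) := by gcongr
    _ = S + I := one_mul _

theorem receivedPower_nonneg (hS : 0 ≤ S) (hI : 0 ≤ I) (hρ : |ρ| ≤ 1) :
    0 ≤ receivedPower S I ρ := by
  linarith [(abs_le.mp (abs_receivedPower_sub_add_le hS hI hρ)).1]

theorem receivedPower_le_two_mul (hS : 0 ≤ S) (hI : 0 ≤ I) (hρ : |ρ| ≤ 1) :
    receivedPower S I ρ ≤ 2 * (S + I) := by
  linarith [(abs_le.mp (abs_receivedPower_sub_add_le hS hI hρ)).2]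

theorem add_le_receivedPower (hρ : 0 ≤ ρ) : S + I ≤ receivedPower S I ρ := by
  have : 0 ≤ 2 * ρ * Real.sqrt (S * I) := by positivity
  unfold receivedPower
  linarith

theorem uncorrelatedPower_nonneg (hP : 0 ≤ P) (hρ : |ρ| ≤ 1) : 0 ≤ uncorrelatedPower P ρ :=
  mul_nonneg (sub_nonneg.mpr ((sq_le_one_iff_abs_le_one ρ).mpr hρ)) hP

theorem uncorrelatedPower_le (hP : 0 ≤ P) : uncorrelatedPower P ρ ≤ P :=
  mul_le_of_le_one_left hP (sub_le_self 1 (sq_nonneg ρ))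

end Power

/-- The converse bound `κ₁,₁(ρ)`. -/
noncomputable def kappa₁ (SNR1 INR12 ρ : ℝ) : ℝ :=
  gaussianCapacity (receivedPower SNR1 INR12 ρ)

/-- The converse bound `κ₂,₁(ρ)`. -/
noncomputable def kappa₂ (SNR1 INR21 ρ : ℝ) : ℝ :=
  gaussianCapacity (uncorrelatedPower INR21 ρ) +
    gaussianCapacity (uncorrelatedPower SNR1 ρ / (uncorrelatedPower INR21 ρ + 1))

/-- The converse bound `κ₃,₁(ρ)`, the only one that involves the feedback link. -/
noncomputable def kappa₃ (SNR1 SNR2 bSNR2 INR21 ρ : ℝ) : ℝ :=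
  gaussianCapacity ((uncorrelatedPower SNR1 ρ + uncorrelatedPower INR21 ρ + 1) * bSNR2 /
      ((receivedPower SNR2 INR21 1 + 1) * (uncorrelatedPower SNR1 ρ + 1))) +
    gaussianCapacity (uncorrelatedPower SNR1 ρ)

/-- The achievable bound `a₁,₁`. -/
noncomputable def ach₁₁ (SNR1 INR21 : ℝ) : ℝ :=
  gaussianCapacity (1 + SNR1 / INR21) - 1/2

/-- The achievable bound `a₂,₁(0)`. -/
noncomputable def ach₂₁ (SNR1 INR12 : ℝ) : ℝ :=
  gaussianCapacity (SNR1 + INR12) - 1/2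

/-- The achievable bound `a₄,₂(0, 0)`. -/
noncomputable def ach₄₂ (INR21 : ℝ) : ℝ :=
  gaussianCapacity INR21 - 1/2

/-- The achievable bound `a₆,₁(0, 0)`. -/
noncomputable def ach₆₁ (SNR1 : ℝ) : ℝ :=
  gaussianCapacity (SNR1 + 1) - 1/2

section Gap

variable {SNR1 SNR2 bSNR2 INR12 INR21 ρ : ℝ}

theorem kappa₁_le_ach₂₁_add_one (hS : 0 ≤ SNR1) (hI : 0 ≤ INR12) (hρ : |ρ| ≤ 1) :
    kappa₁ SNR1 INR12 ρ ≤ ach₂₁ SNR1 INR12 + 1 := by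
  have hdouble := receivedPower_le_two_mul hS hI hρ
  have hgap : kappa₁ SNR1 INR12 ρ ≤ gaussianCapacity (SNR1 + INR12) + 1 / 2 :=
    gaussianCapacity_le_add (receivedPower_nonneg hS hI hρ) (by rw [Real.rpow_one]; linarith)
  unfold ach₂₁
  linarith

theorem kappa₂_le_ach₁₁_add_ach₄₂_add_one (hS : 0 ≤ SNR1) (hI : 0 < INR21) (hρ : |ρ| ≤ 1) :
    kappa₂ SNR1 INR21 ρ ≤ ach₁₁ SNR1 INR21 + ach₄₂ INR21 + 1 := by
  have hS₀ := uncorrelatedPower_nonneg hS hρ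
  have hI₀ := uncorrelatedPower_nonneg hI.le hρ
  have hratio : uncorrelatedPower SNR1 ρ / (uncorrelatedPower INR21 ρ + 1) ≤ SNR1 / INR21 := by
    rw [div_le_div_iff₀ (by positivity) hI]
    calc uncorrelatedPower SNR1 ρ * INR21 = SNR1 * uncorrelatedPower INR21 ρ := by
          unfold uncorrelatedPower
          ring
      _ ≤ SNR1 * (uncorrelatedPower INR21 ρ + 1) := by gcongr; linarith
  have hfirst : gaussianCapacity (uncorrelatedPower INR21 ρ) ≤ gaussianCapacity INR21 :=
    gaussianCapacity_mono hI₀ (uncorrelatedPower_le hI.le)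
  have hsecond : gaussianCapacity (uncorrelatedPower SNR1 ρ / (uncorrelatedPower INR21 ρ + 1)) ≤
      gaussianCapacity (1 + SNR1 / INR21) :=
    gaussianCapacity_mono (by positivity) (by linarith)
  unfold kappa₂ ach₁₁ ach₄₂
  linarith

theorem kappa₂_le_ach₆₁_add_one (hI : 0 ≤ INR21) (hIS : INR21 ≤ SNR1) (hρ : |ρ| ≤ 1) :
    kappa₂ SNR1 INR21 ρ ≤ ach₆₁ SNR1 + 1 := by
  have hS : 0 ≤ SNR1 := hI.trans hIS
  have hS₀ := uncorrelatedPower_nonneg hS hρ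
  have hI₀ := uncorrelatedPower_nonneg hI hρ
  have hS₁ : uncorrelatedPower SNR1 ρ ≤ SNR1 := uncorrelatedPower_le hS
  have hI₁ : uncorrelatedPower INR21 ρ ≤ INR21 := uncorrelatedPower_le hI
  have hgap : kappa₂ SNR1 INR21 ρ ≤ gaussianCapacity (SNR1 + 1) + 1 / 2 := by
    rw [kappa₂, add_comm, gaussianCapacity_div_add hS₀ hI₀]
    exact gaussianCapacity_le_add (by positivity) (by rw [Real.rpow_one]; linarith)
  unfold ach₆₁
  linarith

theorem uncorrelatedPower_add_mul_div_receivedPower_le (hS : 0 ≤ SNR1) (hS₂ : 0 ≤ SNR2)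
    (hb : 0 ≤ bSNR2) (hSI : SNR1 ≤ INR21) :
    (uncorrelatedPower SNR1 ρ + uncorrelatedPower INR21 ρ + 1) * bSNR2 /
      (receivedPower SNR2 INR21 1 + 1) ≤ 2 * bSNR2 := by
  have hI : 0 ≤ INR21 := hS.trans hSI
  have hS₁ : uncorrelatedPower SNR1 ρ ≤ SNR1 := uncorrelatedPower_le hS
  have hI₁ : uncorrelatedPower INR21 ρ ≤ INR21 := uncorrelatedPower_le hI
  have hsum : SNR2 + INR21 ≤ receivedPower SNR2 INR21 1 := add_le_receivedPower zero_le_one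
  rw [div_le_iff₀ (by linarith), mul_right_comm]
  gcongr
  linarith

theorem kappa₃_le_ach₆₁_add_three_halves (hS₂ : 0 ≤ SNR2) (hb : 0 ≤ bSNR2)
    (hSI : SNR1 ≤ INR21) (hbS : bSNR2 ≤ SNR1) (hρ : |ρ| ≤ 1) :
    kappa₃ SNR1 SNR2 bSNR2 INR21 ρ ≤ ach₆₁ SNR1 + 3/2 := by
  have hS : 0 ≤ SNR1 := hb.trans hbS
  have hI : 0 ≤ INR21 := hS.trans hSI
  have hS₀ := uncorrelatedPower_nonneg hS hρ
  have hI₀ := uncorrelatedPower_nonneg hI hρ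
  have hS₁ : uncorrelatedPower SNR1 ρ ≤ SNR1 := uncorrelatedPower_le hS
  have hD : 0 ≤ receivedPower SNR2 INR21 1 := receivedPower_nonneg hS₂ hI abs_one.le
  have hfeedback := uncorrelatedPower_add_mul_div_receivedPower_le (ρ := ρ) hS hS₂ hb hSI
  have hgap : kappa₃ SNR1 SNR2 bSNR2 INR21 ρ ≤ gaussianCapacity (SNR1 + 1) + 2 / 2 := by
    rw [kappa₃, ← div_div, gaussianCapacity_div_add (by positivity) hS₀]
    exact gaussianCapacity_le_add (by positivity) (by norm_num; linarith)
  unfold ach₆₁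
  linarith

theorem min_kappa₂_kappa₃_le_ach₆₁_add_three_halves (hS₂ : 0 ≤ SNR2) (hb : 0 ≤ bSNR2)
    (hI : 0 ≤ INR21) (hbS : bSNR2 ≤ SNR1) (hρ : |ρ| ≤ 1) :
    min (kappa₂ SNR1 INR21 ρ) (kappa₃ SNR1 SNR2 bSNR2 INR21 ρ) ≤ ach₆₁ SNR1 + 3/2 := by
  rcases le_total INR21 SNR1 with hIS | hSI
  · exact min_le_of_left_le (by linarith [kappa₂_le_ach₆₁_add_one hI hIS hρ])
  · exact min_le_of_right_le (kappa₃_le_ach₆₁_add_three_halves hS₂ hb hSI hbS hρ)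

end Gap

theorem single_rate_gap_case11_general {SNR1 SNR2 bSNR2 INR12 INR21 ρ : ℝ}
    (hS2 : 0 ≤ SNR2) (hb2 : 0 ≤ bSNR2) (h12 : 0 ≤ INR12) (h21 : 0 < INR21)
    (hFB : bSNR2 ≤ SNR1) (hρ : |ρ| ≤ 1) :
    min (kappa₁ SNR1 INR12 ρ)
        (min (kappa₂ SNR1 INR21 ρ) (kappa₃ SNR1 SNR2 bSNR2 INR21 ρ)) -
      min (ach₂₁ SNR1 INR12) (min (ach₆₁ SNR1) (ach₁₁ SNR1 INR21 + ach₄₂ INR21)) ≤ 3/2 := by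
  have hS1 : 0 ≤ SNR1 := hb2.trans hFB
  rw [sub_le_comm]
  refine le_min ?_ (le_min ?_ ?_) <;> rw [sub_le_iff_le_add]
  · exact min_le_of_left_le (by linarith [kappa₁_le_ach₂₁_add_one hS1 h12 hρ])
  · exact min_le_of_right_le (min_kappa₂_kappa₃_le_ach₆₁_add_three_halves hS2 hb2 h21.le hFB hρ)
  · exact min_le_of_right_le <| min_le_of_left_le
      (by linarith [kappa₂_le_ach₁₁_add_ach₄₂_add_one hS1 h21 hρ])

/-- Single-rate gap in Case 1.1: the active converse single-rate bound exceeds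
the active achievable single-rate bound by at most `3/2` bits. -/
theorem single_rate_gap_case11
    (SNR1 SNR2 bSNR1 bSNR2 INR12 INR21 : ℝ)
    (hS1 : 0 < SNR1) (hS2 : 0 < SNR2) (hb1 : 0 < bSNR1) (hb2 : 0 < bSNR2)
    (h12 : 1 < INR12) (h21 : 1 < INR21)
    (hHIR1 : INR12 > SNR1) (hHIR2 : INR21 > SNR2)
    (hFB1 : bSNR2 ≤ SNR1) (hFB2 : bSNR1 ≤ SNR2) :
    ∀ ρ' ∈ Set.Icc (0 : ℝ) 1,
    min ((1/2) * Real.logb 2 (SNR1 + 2 * ρ' * Real.sqrt (SNR1 * INR12) + INR12 + 1))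
      (min ((1/2) * Real.logb 2 (1 + (1 - ρ'^2) * INR21) +
            (1/2) * Real.logb 2 (1 + ((1 - ρ'^2) * SNR1) / (1 + (1 - ρ'^2) * INR21)))
           ((1/2) * Real.logb 2
              ((((1 - ρ'^2) * SNR1 + (1 - ρ'^2) * INR21 + 1) * bSNR2) /
                (((SNR2 + 2 * Real.sqrt (SNR2 * INR21) + INR21) + 1) *
                  ((1 - ρ'^2) * SNR1 + 1)) + 1) +
            (1/2) * Real.logb 2 ((1 - ρ'^2) * SNR1 + 1))) -
    min ((1/2) * Real.logb 2 (SNR1 + INR12 + 1) - 1/2)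
      (min (((1/2) * Real.logb 2 (SNR1 + 2) - 1/2) + 0)
           (((1/2) * Real.logb 2 (2 + SNR1 / INR21) - 1/2) + 0 +
            ((1/2) * Real.logb 2 (INR21 + 1) - 1/2))) ≤ 3/2 := by
  intro ρ hρ
  simpa [kappa₁, kappa₂, kappa₃, ach₁₁, ach₂₁, ach₄₂, ach₆₁, gaussianCapacity, receivedPower,
    uncorrelatedPower, one_add_one_eq_two, add_assoc, add_comm, add_left_comm] using
    single_rate_gap_case11_general hS2.le hb2.le (zero_le_one.trans h12.le) (one_pos.trans h21)
      hFB1 (abs_le.mpr ⟨neg_one_lt_zero.le.trans hρ.1, hρ.2⟩)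
end

section
/- Fix real numbers SNR1, SNR2 > 0 and INR12, INR21 > 1. For every ρ ∈ [0,1): κ_4(ρ) ≤ (1/2)·log(2 + SNR1/INR21) + (1/2)·log(SNR2 + INR21 + 1) + 1/2, and κ_5(ρ) ≤ (1/2)·log(2 + SNR2/INR12) + (1/2)·log(SNR1 + INR12 + 1) + 1/2. -/
/-!
The two bounds are one function of `(S, T, I, ρ)` with the users exchanged, so a single estimate
suffices. In the first logarithm `x ↦ x S / (1 + x I)` stays below its limit `S / I`. In the second,
`2 |ρ| √(T I) ≤ T + I` by AM-GM, so correlating the inputs at most doubles the argument, which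
costs half a bit.
-/

/-- The converse sum-rate bound `κ` as a function of one transmitter's forward SNR `S`, the other
transmitter's forward SNR `T`, the interference-to-noise ratio `I` and the input correlation `ρ`:
`κ₄(ρ)` is `sumRateBound SNR1 SNR2 INR21 ρ` and `κ₅(ρ)` is `sumRateBound SNR2 SNR1 INR12 ρ`. -/
noncomputable def sumRateBound (S T I ρ : ℝ) : ℝ :=
  (1/2) * Real.logb 2 (1 + ((1 - ρ^2) * S) / (1 + (1 - ρ^2) * I)) +
    (1/2) * Real.logb 2 ((T + 2 * ρ * √(T * I) + I) + 1)

theorem mul_div_one_add_mul_le_div {K : Type*} [Field K] [LinearOrder K] [IsStrictOrderedRing K]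
    {x S I : K} (hx : 0 ≤ x) (hS : 0 ≤ S) (hI : 0 < I) :
    x * S / (1 + x * I) ≤ S / I := by
  rw [div_le_div_iff₀ (by positivity) hI]
  calc x * S * I = S * (x * I) := by ring
    _ ≤ S * (1 + x * I) := by gcongr; exact le_add_of_nonneg_left zero_le_one

theorem abs_two_mul_mul_sqrt_mul_le_add {x y ρ : ℝ} (hx : 0 ≤ x) (hy : 0 ≤ y) (hρ : |ρ| ≤ 1) :
    |2 * ρ * √(x * y)| ≤ x + y :=
  calc |2 * ρ * √(x * y)| = |ρ| * (2 * √x * √y) := by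
        rw [abs_mul, abs_mul, abs_two, abs_of_nonneg (Real.sqrt_nonneg _), Real.sqrt_mul hx]
        ring
    _ ≤ 2 * √x * √y := mul_le_of_le_one_left (by positivity) hρ
    _ ≤ √x ^ 2 + √y ^ 2 := two_mul_le_add_sq _ _
    _ = x + y := by rw [Real.sq_sqrt hx, Real.sq_sqrt hy]

theorem logb_two_le_logb_two_add_one {x y : ℝ} (hx : 0 < x) (hxy : x ≤ 2 * y) :
    Real.logb 2 x ≤ Real.logb 2 y + 1 := by
  have hy : 0 < y := by linarith
  calc Real.logb 2 x ≤ Real.logb 2 (2 * y) := Real.logb_le_logb_of_le one_lt_two hx hxy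
    _ = Real.logb 2 y + 1 := by
      rw [Real.logb_mul two_ne_zero hy.ne', Real.logb_self_eq_one one_lt_two, add_comm]

theorem kappa4_kappa5_upper_bounds_general {S T I ρ : ℝ}
    (hS : 0 ≤ S) (hT : 0 ≤ T) (hI : 0 < I) (hρ : |ρ| ≤ 1) :
    sumRateBound S T I ρ ≤
      (1/2) * Real.logb 2 (1 + S / I) + (1/2) * Real.logb 2 (T + I + 1) + 1/2 := by
  have hc : 0 ≤ 1 - ρ ^ 2 := sub_nonneg.2 ((sq_le_one_iff_abs_le_one ρ).2 hρ)
  have private_rate : Real.logb 2 (1 + ((1 - ρ^2) * S) / (1 + (1 - ρ^2) * I)) ≤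
      Real.logb 2 (1 + S / I) :=
    Real.logb_le_logb_of_le one_lt_two (by positivity)
      (by gcongr 1 + ?_; exact mul_div_one_add_mul_le_div hc hS hI)
  have received_rate : Real.logb 2 ((T + 2 * ρ * √(T * I) + I) + 1) ≤
      Real.logb 2 (T + I + 1) + 1 := by
    obtain ⟨cross_ge, cross_le⟩ := abs_le.1 (abs_two_mul_mul_sqrt_mul_le_add hT hI.le hρ)
    exact logb_two_le_logb_two_add_one (by linarith) (by linarith)
  unfold sumRateBound
  linarith

/-- Upper bounds on the converse sum-rate bounds `κ_4(ρ)` and `κ_5(ρ)` for `ρ ∈ [0,1)`. -/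
theorem kappa4_kappa5_upper_bounds
    (SNR1 SNR2 INR12 INR21 : ℝ)
    (hS1 : 0 < SNR1) (hS2 : 0 < SNR2) (h12 : 1 < INR12) (h21 : 1 < INR21) :
    ∀ ρ ∈ Set.Ico (0 : ℝ) 1,
    ((1/2) * Real.logb 2 (1 + ((1 - ρ^2) * SNR1) / (1 + (1 - ρ^2) * INR21)) +
      (1/2) * Real.logb 2 ((SNR2 + 2 * ρ * Real.sqrt (SNR2 * INR21) + INR21) + 1) ≤
      (1/2) * Real.logb 2 (2 + SNR1 / INR21) +
        (1/2) * Real.logb 2 (SNR2 + INR21 + 1) + 1/2) ∧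
    ((1/2) * Real.logb 2 (1 + ((1 - ρ^2) * SNR2) / (1 + (1 - ρ^2) * INR12)) +
      (1/2) * Real.logb 2 ((SNR1 + 2 * ρ * Real.sqrt (SNR1 * INR12) + INR12) + 1) ≤
      (1/2) * Real.logb 2 (2 + SNR2 / INR12) +
        (1/2) * Real.logb 2 (SNR1 + INR12 + 1) + 1/2) := by
  intro ρ ⟨hρ0, hρ1⟩
  have hρ : |ρ| ≤ 1 := (abs_of_nonneg hρ0).trans_le hρ1.le
  have hI12 : 0 < INR12 := one_pos.trans h12
  have hI21 : 0 < INR21 := one_pos.trans h21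
  exact ⟨(kappa4_kappa5_upper_bounds_general hS1.le hS2.le hI21 hρ).trans (by gcongr <;> norm_num),
    (kappa4_kappa5_upper_bounds_general hS2.le hS1.le hI12 hρ).trans (by gcongr <;> norm_num)⟩
end
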